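/- Let λ ⊢ n. The Specht module SP_λ, with the symmetric group S_n acting by permuting the variables of ℂ[x₁,…,x_n], is an irreducible representation: SP_λ ≠ 0, and the only S_n-invariant ℂ-linear subspaces of SP_λ are 0 and SP_λ itself. -/

import Mathlib

open scoped Classical

noncomputable section

open MvPolynomial

/-- The Specht polynomial of a bijective filling `T` of the cells of `lam` by `0,…,n-1`:
the product over all pairs of cells in the same column (the first strictly above the
second) of the differences of the corresponding variables — i.e. the product of the
column Vandermonde determinants. -/
noncomputable def spechtPoly (n : ℕ) (lam : YoungDiagram) (T : lam.cells ≃ Fin n) :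
    MvPolynomial (Fin n) ℂ :=
  ∏ p ∈ Finset.univ.filter
      (fun p : lam.cells × lam.cells =>
        (p.1 : ℕ × ℕ).2 = (p.2 : ℕ × ℕ).2 ∧ (p.1 : ℕ × ℕ).1 < (p.2 : ℕ × ℕ).1),
    (X (T p.1) - X (T p.2))

/-- The Specht module: the linear span of all Specht polynomials of shape `lam`. -/
noncomputable def spechtModule (n : ℕ) (lam : YoungDiagram) :
    Submodule ℂ (MvPolynomial (Fin n) ℂ) :=
  Submodule.span ℂ (Set.range (spechtPoly n lam))

/-!
By Maschke's theorem an invariant subspace `W` of the Specht module has an invariant complement `V`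
in the whole polynomial ring. Write a Specht polynomial as `w + v` with `w ∈ W` and `v ∈ V`.
A transposition of two entries of a column of `T` negates the Specht polynomial, hence also `w`, so
`w` is divisible by every factor of `spechtPoly n lam T`; having the same degree, it is a scalar
multiple of it. Hence `spechtPoly n lam T` lies in `W` or in `V`, and so does the whole Specht
module, as its orbit spans: either `W` is everything, or `W ≤ V` and `W = ⊥`.
-/

section DifferencesOfVariables

variable {σ R : Type*} [CommRing R]

section Swap

variable [DecidableEq σ]

-- `rename (Function.update id i j)` substitutes `X j` for `X i`.
lemma X_sub_X_dvd_sub_rename_update (i j : σ) (f : MvPolynomial σ R) :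
    X i - X j ∣ f - rename (Function.update id i j) f := by
  set π := Ideal.Quotient.mkₐ R (Ideal.span {(X i - X j : MvPolynomial σ R)})
  have hX : π (X i) = π (X j) :=
    Ideal.Quotient.eq.2 (Ideal.mem_span_singleton_self _)
  have hπ : π.comp (rename (Function.update id i j)) = π := by
    refine algHom_ext fun k => ?_
    by_cases hk : k = i <;> simp [hk, hX]
  rw [← Ideal.mem_span_singleton, ← Ideal.Quotient.eq]
  exact (DFunLike.congr_fun hπ f).symm

lemma X_sub_X_dvd_iff {i j : σ} {f : MvPolynomial σ R} :
    X i - X j ∣ f ↔ rename (Function.update id i j) f = 0 := by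
  refine ⟨?_, fun h => by simpa [h] using X_sub_X_dvd_sub_rename_update i j f⟩
  rintro ⟨q, rfl⟩
  have hj : Function.update id i j j = j := by
    by_cases h : j = i <;> simp [h]
  simp [hj]

lemma rename_update_rename_swap (i j : σ) (f : MvPolynomial σ R) :
    rename (Function.update id i j) (rename (Equiv.swap i j) f) =
      rename (Function.update id i j) f := by
  rw [rename_rename]
  congr 2
  funext k
  simp only [Function.comp_apply, Equiv.swap_apply_def, Function.update_apply, id_eq]
  split_ifs <;> simp_all

lemma X_sub_X_dvd_of_rename_swap_eq_neg [IsDomain R] [CharZero R] {i j : σ}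
    {f : MvPolynomial σ R} (hf : rename (Equiv.swap i j) f = -f) : X i - X j ∣ f := by
  have h := rename_update_rename_swap i j f
  rw [hf, map_neg, neg_eq_self] at h
  exact X_sub_X_dvd_iff.2 h

-- Cancelling `X i - X j` leaves the swap acting on `q` by `-c`; once `X i` and `X j` are
-- identified, the swap acts trivially and `q` is still nonzero.
lemma eq_neg_one_of_rename_swap_eq_smul [IsDomain R] {i j : σ} (hij : i ≠ j)
    {q : MvPolynomial σ R} (hq : ¬ X i - X j ∣ q) {c : R}
    (hc : rename (Equiv.swap i j) ((X i - X j) * q) = c • ((X i - X j) * q)) : c = -1 := by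
  have hX : (X i - X j : MvPolynomial σ R) ≠ 0 := sub_ne_zero.2 (X_injective.ne hij)
  have hswap : rename (Equiv.swap i j) q = -(c • q) := by
    refine mul_left_cancel₀ hX ?_
    rw [mul_neg, mul_smul_comm, ← hc]
    simp only [map_mul, map_sub, rename_X, Equiv.swap_apply_left, Equiv.swap_apply_right]
    ring
  have hcollapse := rename_update_rename_swap i j q
  rw [hswap, map_neg, map_smul, ← neg_smul] at hcollapse
  have hc1 : -c = 1 := smul_left_injective R (mt X_sub_X_dvd_iff.2 hq) (by simpa using hcollapse)
  rw [← hc1, neg_neg]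

end Swap

lemma prime_X_sub_X [IsDomain R] {i j : σ} (hij : i ≠ j) :
    Prime (X i - X j : MvPolynomial σ R) := by
  refine ⟨sub_ne_zero.2 (X_injective.ne hij), fun h => ?_, fun f g => ?_⟩
  · simpa using X_sub_X_dvd_iff.1 (h.dvd (a := 1))
  · simp only [X_sub_X_dvd_iff, map_mul, mul_eq_zero, imp_self]

lemma X_sub_X_dvd_X_sub_X_iff [Nontrivial R] {i j k l : σ} (hkl : k ≠ l) :
    (X i - X j : MvPolynomial σ R) ∣ X k - X l ↔ s(i, j) = s(k, l) := by
  rw [X_sub_X_dvd_iff, map_sub, rename_X, rename_X, sub_eq_zero, X_injective.eq_iff, Sym2.eq_iff]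
  simp only [Function.update_apply, id_eq]
  grind

end DifferencesOfVariables

lemma exists_eq_smul_of_isHomogeneous_of_dvd {σ R : Type*} [CommRing R] [IsDomain R] {d : ℕ}
    {p f : MvPolynomial σ R} (hp : p.IsHomogeneous d) (hf : f.IsHomogeneous d) (hpf : p ∣ f) :
    ∃ c : R, f = c • p := by
  obtain ⟨q, rfl⟩ := hpf
  by_cases h0 : p * q = 0
  · exact ⟨0, by rw [h0, zero_smul]⟩
  have hdeg := totalDegree_mul_of_isDomain (left_ne_zero_of_mul h0) (right_ne_zero_of_mul h0)
  rw [hf.totalDegree h0, hp.totalDegree (left_ne_zero_of_mul h0), left_eq_add] at hdeg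
  refine ⟨coeff 0 q, ?_⟩
  rw [smul_eq_C_mul, mul_comm p, ← totalDegree_eq_zero_iff_eq_C.1 hdeg]

lemma apply_eq_smul_of_disjoint {R G M : Type*} [Ring R] [Monoid G] [AddCommGroup M]
    [Module R M] {ρ : Representation R G M} {W V : Subrepresentation ρ} (hWV : Disjoint W V)
    {w v : M} (hw : w ∈ W) (hv : v ∈ V) {g : G} {a : R} (h : ρ g (w + v) = a • (w + v)) :
    ρ g w = a • w := by
  have hW : ρ g w - a • w ∈ W.toSubmodule :=
    sub_mem (W.apply_mem_toSubmodule g hw) (W.toSubmodule.smul_mem a hw)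
  have hV : a • v - ρ g v ∈ V.toSubmodule :=
    sub_mem (V.toSubmodule.smul_mem a hv) (V.apply_mem_toSubmodule g hv)
  have heq : ρ g w - a • w = a • v - ρ g v := by
    rw [sub_eq_sub_iff_add_eq_add, ← map_add, h, smul_add, add_comm]
  have hmem : ρ g w - a • w ∈ W ⊓ V := ⟨hW, heq ▸ hV⟩
  rw [hWV.eq_bot] at hmem
  exact sub_eq_zero.1 ((Submodule.mem_bot R).1 hmem)

/-- The representation of the group of permutations of `σ` on polynomials over `R` by permuting
the variables. -/
def renameRepresentation (σ R : Type*) [CommSemiring R] :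
    Representation R (Equiv.Perm σ) (MvPolynomial σ R) where
  toFun g := (rename g).toLinearMap
  map_one' := LinearMap.ext fun f => rename_id_apply f
  map_mul' g h := LinearMap.ext fun f => (rename_rename h g f).symm

/-- The pairs of cells of a common column of `lam`, the upper cell first. They index the linear
factors of the Specht polynomials of shape `lam`. -/
def columnPairs (lam : YoungDiagram) : Finset (lam.cells × lam.cells) :=
  Finset.univ.filter fun p =>
    (p.1 : ℕ × ℕ).2 = (p.2 : ℕ × ℕ).2 ∧ (p.1 : ℕ × ℕ).1 < (p.2 : ℕ × ℕ).1

section SpechtPolynomials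

variable {n : ℕ} {lam : YoungDiagram}

lemma mem_columnPairs {p : lam.cells × lam.cells} : p ∈ columnPairs lam ↔
    (p.1 : ℕ × ℕ).2 = (p.2 : ℕ × ℕ).2 ∧ (p.1 : ℕ × ℕ).1 < (p.2 : ℕ × ℕ).1 := by
  simp [columnPairs]

lemma fst_ne_snd_of_mem_columnPairs {p : lam.cells × lam.cells} (hp : p ∈ columnPairs lam) :
    p.1 ≠ p.2 := fun h =>
  (mem_columnPairs.1 hp).2.ne (by rw [h])

lemma injOn_sym2Mk_columnPairs :
    Set.InjOn (fun p : lam.cells × lam.cells => s(p.1, p.2)) (columnPairs lam) := by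
  rintro ⟨a, b⟩ hab ⟨c, d⟩ hcd h
  rcases Sym2.eq_iff.1 h with ⟨rfl, rfl⟩ | ⟨rfl, rfl⟩
  · rfl
  · exact absurd (mem_columnPairs.1 hcd).2 (mem_columnPairs.1 hab).2.asymm

lemma spechtPoly_eq_prod_columnPairs (T : lam.cells ≃ Fin n) :
    spechtPoly n lam T = ∏ p ∈ columnPairs lam, (X (T p.1) - X (T p.2)) := rfl

lemma rename_spechtPoly (T : lam.cells ≃ Fin n) (g : Equiv.Perm (Fin n)) :
    rename g (spechtPoly n lam T) = spechtPoly n lam (T.trans g) := by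
  simp [spechtPoly_eq_prod_columnPairs, map_prod]

lemma spechtPoly_ne_zero (T : lam.cells ≃ Fin n) : spechtPoly n lam T ≠ 0 :=
  Finset.prod_ne_zero_iff.2 fun _ hp =>
    sub_ne_zero.2 (X_injective.ne (T.injective.ne (fst_ne_snd_of_mem_columnPairs hp)))

lemma isHomogeneous_spechtPoly (T : lam.cells ≃ Fin n) :
    (spechtPoly n lam T).IsHomogeneous (columnPairs lam).card := by
  rw [spechtPoly_eq_prod_columnPairs, Finset.card_eq_sum_ones]
  exact IsHomogeneous.prod _ _ _ fun _ _ => (isHomogeneous_X ℂ _).sub (isHomogeneous_X ℂ _)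

lemma isHomogeneous_of_mem_spechtModule {f : MvPolynomial (Fin n) ℂ}
    (hf : f ∈ spechtModule n lam) : f.IsHomogeneous (columnPairs lam).card := by
  have hle : spechtModule n lam ≤ homogeneousSubmodule (Fin n) ℂ (columnPairs lam).card :=
    Submodule.span_le.2 (Set.range_subset_iff.2 isHomogeneous_spechtPoly)
  exact hle hf

lemma X_sub_X_dvd_X_sub_X_iff_of_mem_columnPairs (T : lam.cells ≃ Fin n)
    {p q : lam.cells × lam.cells} (hp : p ∈ columnPairs lam) (hq : q ∈ columnPairs lam) :
    (X (T p.1) - X (T p.2) : MvPolynomial (Fin n) ℂ) ∣ X (T q.1) - X (T q.2) ↔ p = q := by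
  rw [X_sub_X_dvd_X_sub_X_iff (T.injective.ne (fst_ne_snd_of_mem_columnPairs hq)),
    ← Sym2.map_mk, ← Sym2.map_mk, (Sym2.map.injective T.injective).eq_iff]
  exact injOn_sym2Mk_columnPairs.eq_iff hp hq

lemma prime_X_sub_X_of_mem_columnPairs (T : lam.cells ≃ Fin n) {p : lam.cells × lam.cells}
    (hp : p ∈ columnPairs lam) : Prime (X (T p.1) - X (T p.2) : MvPolynomial (Fin n) ℂ) :=
  prime_X_sub_X (T.injective.ne (fst_ne_snd_of_mem_columnPairs hp))

lemma spechtPoly_dvd_of_forall_dvd (T : lam.cells ≃ Fin n) {f : MvPolynomial (Fin n) ℂ}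
    (hf : ∀ p ∈ columnPairs lam, X (T p.1) - X (T p.2) ∣ f) : spechtPoly n lam T ∣ f := by
  refine Finset.prod_dvd_of_isRelPrime (fun p hp q hq hpq => ?_) hf
  exact (prime_X_sub_X_of_mem_columnPairs T hp).irreducible.isRelPrime_iff_not_dvd.2
    (mt (X_sub_X_dvd_X_sub_X_iff_of_mem_columnPairs T hp hq).1 hpq)

lemma X_sub_X_dvd_spechtPoly (T : lam.cells ≃ Fin n) {c d : lam.cells} (hcd : c ≠ d)
    (hcol : (c : ℕ × ℕ).2 = (d : ℕ × ℕ).2) : X (T c) - X (T d) ∣ spechtPoly n lam T := by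
  have hrow : (c : ℕ × ℕ).1 ≠ (d : ℕ × ℕ).1 := fun h => hcd (Subtype.ext (Prod.ext h hcol))
  have hfactor : ∀ p ∈ columnPairs lam, X (T p.1) - X (T p.2) ∣ spechtPoly n lam T :=
    fun p hp => Finset.dvd_prod_of_mem _ hp
  rcases hrow.lt_or_gt with h | h
  · exact hfactor (c, d) (mem_columnPairs.2 ⟨hcol, h⟩)
  · rw [← neg_sub, neg_dvd]
    exact hfactor (d, c) (mem_columnPairs.2 ⟨hcol.symm, h⟩)

lemma spechtPoly_dvd_rename_swap (T : lam.cells ≃ Fin n) {p : lam.cells × lam.cells}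
    (hp : p ∈ columnPairs lam) :
    spechtPoly n lam T ∣ rename (Equiv.swap (T p.1) (T p.2)) (spechtPoly n lam T) := by
  have hcol (c : lam.cells) : (Equiv.swap p.1 p.2 c : ℕ × ℕ).2 = (c : ℕ × ℕ).2 := by
    have := (mem_columnPairs.1 hp).1
    rw [Equiv.swap_apply_def]
    split_ifs <;> simp_all
  rw [rename_spechtPoly]
  refine spechtPoly_dvd_of_forall_dvd T fun q hq => ?_
  have h := X_sub_X_dvd_spechtPoly (T.trans (Equiv.swap (T p.1) (T p.2)))
    ((Equiv.swap p.1 p.2).injective.ne (fst_ne_snd_of_mem_columnPairs hq))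
    (by rw [hcol, hcol, (mem_columnPairs.1 hq).1])
  simpa [T.injective.swap_apply] using h

lemma rename_swap_spechtPoly (T : lam.cells ≃ Fin n) {p : lam.cells × lam.cells}
    (hp : p ∈ columnPairs lam) :
    rename (Equiv.swap (T p.1) (T p.2)) (spechtPoly n lam T) = -spechtPoly n lam T := by
  obtain ⟨c, hc⟩ := exists_eq_smul_of_isHomogeneous_of_dvd (isHomogeneous_spechtPoly T)
    (isHomogeneous_spechtPoly T).rename_isHomogeneous (spechtPoly_dvd_rename_swap T hp)
  have hndvd : ¬ (X (T p.1) - X (T p.2) : MvPolynomial (Fin n) ℂ) ∣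
      ∏ q ∈ (columnPairs lam).erase p, (X (T q.1) - X (T q.2)) := by
    rw [(prime_X_sub_X_of_mem_columnPairs T hp).dvd_finsetProd_iff]
    rintro ⟨q, hq, hdvd⟩
    exact Finset.ne_of_mem_erase hq
      ((X_sub_X_dvd_X_sub_X_iff_of_mem_columnPairs T hp (Finset.mem_of_mem_erase hq)).1 hdvd).symm
  have hc1 : c = -1 := by
    refine eq_neg_one_of_rename_swap_eq_smul
      (T.injective.ne (fst_ne_snd_of_mem_columnPairs hp)) hndvd ?_
    rwa [spechtPoly_eq_prod_columnPairs, ← Finset.mul_prod_erase _ _ hp] at hc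
  rw [hc, hc1, neg_one_smul]

lemma exists_eq_smul_spechtPoly_of_rename_swap_eq_neg (T : lam.cells ≃ Fin n)
    {f : MvPolynomial (Fin n) ℂ}
    (hhom : f.IsHomogeneous (columnPairs lam).card)
    (halt : ∀ p ∈ columnPairs lam, rename (Equiv.swap (T p.1) (T p.2)) f = -f) :
    ∃ c : ℂ, f = c • spechtPoly n lam T :=
  exists_eq_smul_of_isHomogeneous_of_dvd (isHomogeneous_spechtPoly T) hhom
    (spechtPoly_dvd_of_forall_dvd T fun p hp => X_sub_X_dvd_of_rename_swap_eq_neg (halt p hp))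

lemma spechtModule_le_of_spechtPoly_mem (W : Subrepresentation (renameRepresentation (Fin n) ℂ))
    {T : lam.cells ≃ Fin n} (hT : spechtPoly n lam T ∈ W) :
    spechtModule n lam ≤ W.toSubmodule := by
  refine Submodule.span_le.2 (Set.range_subset_iff.2 fun T' => ?_)
  have hT' : rename (T.symm.trans T') (spechtPoly n lam T) = spechtPoly n lam T' := by
    rw [rename_spechtPoly, ← Equiv.trans_assoc, Equiv.self_trans_symm, Equiv.refl_trans]
  exact hT' ▸ W.apply_mem_toSubmodule (T.symm.trans T') hT

lemma spechtPoly_mem_or_mem_of_isCompl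
    {W V : Subrepresentation (renameRepresentation (Fin n) ℂ)} (hWV : IsCompl W V)
    (hW : W.toSubmodule ≤ spechtModule n lam) (T : lam.cells ≃ Fin n) :
    spechtPoly n lam T ∈ W ∨ spechtPoly n lam T ∈ V := by
  obtain ⟨w, hw, v, hv, hwv⟩ : ∃ w ∈ W, ∃ v ∈ V, w + v = spechtPoly n lam T :=
    Submodule.mem_sup.1 (hWV.sup_eq_top ▸ Submodule.mem_top : spechtPoly n lam T ∈ W ⊔ V)
  have halt : ∀ p ∈ columnPairs lam, rename (Equiv.swap (T p.1) (T p.2)) w = -w := by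
    intro p hp
    rw [← neg_one_smul ℂ w]
    refine apply_eq_smul_of_disjoint hWV.disjoint hw hv
      (g := Equiv.swap (T p.1) (T p.2)) (a := -1) ?_
    rw [hwv, neg_one_smul]
    exact rename_swap_spechtPoly T hp
  obtain ⟨c, rfl⟩ := exists_eq_smul_spechtPoly_of_rename_swap_eq_neg T
    (isHomogeneous_of_mem_spechtModule (hW hw)) halt
  rcases eq_or_ne c 0 with rfl | hc
  · right
    rwa [← hwv, zero_smul, zero_add]
  · exact Or.inl ((W.toSubmodule.smul_mem_iff hc).1 hw)

end SpechtPolynomials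

/-- The Specht module `SP_λ`, with `S_n` acting by permuting the variables, is an
irreducible representation: it is nonzero and its only invariant subspaces are `0` and
`SP_λ` itself. -/
theorem spechtModule_irreducible (n : ℕ) (lam : YoungDiagram) (hlam : lam.card = n) :
    spechtModule n lam ≠ ⊥ ∧
      ∀ W : Submodule ℂ (MvPolynomial (Fin n) ℂ), W ≤ spechtModule n lam →
        (∀ g : Equiv.Perm (Fin n), ∀ p ∈ W, MvPolynomial.rename g p ∈ W) →
        W = ⊥ ∨ W = spechtModule n lam := by
  obtain ⟨T⟩ : Nonempty (lam.cells ≃ Fin n) := ⟨Finset.equivFinOfCardEq hlam⟩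
  refine ⟨fun hbot => spechtPoly_ne_zero T ?_, fun W hW hinv => ?_⟩
  · rw [← Submodule.mem_bot ℂ, ← hbot]
    exact Submodule.subset_span ⟨T, rfl⟩
  let W' : Subrepresentation (renameRepresentation (Fin n) ℂ) := ⟨W, hinv⟩
  obtain ⟨V, hWV⟩ := exists_isCompl W'
  rcases spechtPoly_mem_or_mem_of_isCompl hWV hW T with hT | hT
  · exact Or.inr (hW.antisymm (spechtModule_le_of_spechtPoly_mem W' hT))
  · have hWV' : W' ≤ V := hW.trans (spechtModule_le_of_spechtPoly_mem V hT)
    exact Or.inl (congrArg Subrepresentation.toSubmodule (hWV.disjoint.eq_bot_of_le hWV'))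

end
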